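/- arXiv:2411.11271 — 2 statements merged into one kernel-verified Lean document; each statement's English description precedes it below -/
import Mathlib

section
/- Let (X_m)_{m≥1} be Bochner-integrable 𝔹-valued random variables adapted to a filtration (F_m)_{m≥0} with E[X_m | F_{m−1}] = 0 almost surely and E‖X_m‖^p < ∞ for all m, where p ∈ (1,2]. Then for every n ≥ 1, E‖X_1 + ⋯ + X_n‖^p ≤ 2^p·β^p·Σ_{m=1}^n E‖X_m‖^p. -/
open MeasureTheory

/-!
Concavity of `t ↦ t ^ (p / q)` turns `(q, β)`-smoothness of a norm into `(p, β)`-smoothness for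
`0 < p ≤ q`. If `S` is measurable with respect to the past and `D` is a martingale difference, then
`E[S - D | past] = S`, so conditional Jensen gives `E‖S‖ ^ p ≤ E‖S - D‖ ^ p`. Subtracting this from
the expectation of the `(p, β)`-smoothness inequality at `(S, D)` leaves
`E‖S + D‖ ^ p ≤ E‖S‖ ^ p + 2 β ^ p E‖D‖ ^ p`, which telescopes; finally `2 ≤ 2 ^ p`.
-/

theorem rpow_add_rpow_le_of_add_le_two_mul {r a b c d : ℝ} (hr₀ : 0 ≤ r) (hr₁ : r ≤ 1)
    (ha : 0 ≤ a) (hb : 0 ≤ b) (hc : 0 ≤ c) (hd : 0 ≤ d) (h : a + b ≤ 2 * c + 2 * d) :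
    a ^ r + b ^ r ≤ 2 * c ^ r + 2 * d ^ r := by
  have midpoint_concave : 1 / 2 * a ^ r + 1 / 2 * b ^ r ≤ (1 / 2 * a + 1 / 2 * b) ^ r :=
    (Real.concaveOn_rpow hr₀ hr₁).2 ha hb (by norm_num) (by norm_num) (by norm_num)
  have midpoint_le : (1 / 2 * a + 1 / 2 * b) ^ r ≤ c ^ r + d ^ r :=
    calc (1 / 2 * a + 1 / 2 * b) ^ r ≤ (c + d) ^ r :=
          Real.rpow_le_rpow (by positivity) (by linarith) hr₀
      _ ≤ c ^ r + d ^ r := Real.rpow_add_le_add_rpow hc hd hr₀ hr₁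
  linarith

/-- `(q, β)`-smoothness of the norm of `E`: uniform smoothness of power type `q` in quantitative
form, the geometric input of the moment inequalities below. As `β ^ q` is a real power, the property
is meant for `β ≥ 0`. -/
def IsSmoothNorm (E : Type*) [NormedAddCommGroup E] (q β : ℝ) : Prop :=
  ∀ x y : E, ‖x + y‖ ^ q + ‖x - y‖ ^ q ≤ 2 * ‖x‖ ^ q + 2 * β ^ q * ‖y‖ ^ q

theorem IsSmoothNorm.of_exponent_le {E : Type*} [NormedAddCommGroup E] {p q β : ℝ}
    (h : IsSmoothNorm E q β) (hβ : 0 ≤ β) (hp : 0 < p) (hpq : p ≤ q) : IsSmoothNorm E p β := by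
  intro x y
  have hq : 0 < q := hp.trans_le hpq
  have rpow_rpow_div {t : ℝ} (ht : 0 ≤ t) : (t ^ q) ^ (p / q) = t ^ p := by
    rw [← Real.rpow_mul ht, mul_div_cancel₀ p hq.ne']
  have hxy : ‖x + y‖ ^ q + ‖x - y‖ ^ q ≤ 2 * ‖x‖ ^ q + 2 * (β * ‖y‖) ^ q := by
    rw [Real.mul_rpow hβ (norm_nonneg y), ← mul_assoc]
    exact h x y
  have key := rpow_add_rpow_le_of_add_le_two_mul (r := p / q) (by positivity)
    ((div_le_one hq).2 hpq) (by positivity) (by positivity) (by positivity) (by positivity) hxy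
  rwa [rpow_rpow_div (norm_nonneg _), rpow_rpow_div (norm_nonneg _), rpow_rpow_div (norm_nonneg _),
    rpow_rpow_div (by positivity), Real.mul_rpow hβ (norm_nonneg y), ← mul_assoc] at key

section

variable {E Ω : Type*} [NormedAddCommGroup E] {mΩ : MeasurableSpace Ω} {P : Measure Ω} {p : ℝ}

theorem integrable_norm_rpow_iff_memLp_ofReal {f : Ω → E} (hf : AEStronglyMeasurable f P)
    (hp : 0 < p) :
    Integrable (fun ω => ‖f ω‖ ^ p) P ↔ MemLp f (ENNReal.ofReal p) P := by
  simpa only [ENNReal.toReal_ofReal hp.le] using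
    integrable_norm_rpow_iff hf (ENNReal.ofReal_pos.2 hp).ne' ENNReal.ofReal_ne_top

variable [NormedSpace ℝ E] [CompleteSpace E] {m : MeasurableSpace Ω} {S D : Ω → E}

theorem condExp_sub_ae_eq_left (hm : m ≤ mΩ) [SigmaFinite (P.trim hm)]
    (hSm : StronglyMeasurable[m] S) (hS : Integrable S P) (hD : Integrable D P)
    (hD₀ : P[D | m] =ᵐ[P] 0) : P[S - D | m] =ᵐ[P] S :=
  calc P[S - D | m] =ᵐ[P] P[S | m] - P[D | m] := condExp_sub hS hD m
    _ =ᵐ[P] P[S | m] - 0 := Filter.EventuallyEq.rfl.sub hD₀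
    _ = S := by rw [sub_zero, condExp_of_stronglyMeasurable hm hSm hS]

theorem integral_norm_rpow_le_integral_norm_sub_rpow (hp : 1 ≤ p) (hm : m ≤ mΩ)
    [SigmaFinite (P.trim hm)] (hSm : StronglyMeasurable[m] S) (hS : Integrable S P)
    (hD : Integrable D P) (hD₀ : P[D | m] =ᵐ[P] 0)
    (hSD : Integrable (fun ω => ‖S ω - D ω‖ ^ p) P) :
    ∫ ω, ‖S ω‖ ^ p ∂P ≤ ∫ ω, ‖S ω - D ω‖ ^ p ∂P :=
  calc ∫ ω, ‖S ω‖ ^ p ∂P = ∫ ω, ‖P[S - D | m] ω‖ ^ p ∂P :=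
        integral_congr_ae <| (condExp_sub_ae_eq_left hm hSm hS hD hD₀).symm.fun_comp (‖·‖ ^ p)
    _ ≤ ∫ ω, ‖S ω - D ω‖ ^ p ∂P := integral_norm_condExp_rpow_le hp hSD

theorem IsSmoothNorm.integral_norm_add_rpow_le {β : ℝ} (hE : IsSmoothNorm E p β) (hp : 1 ≤ p)
    (hm : m ≤ mΩ) [SigmaFinite (P.trim hm)] (hSm : StronglyMeasurable[m] S)
    (hS : Integrable S P) (hD : Integrable D P) (hD₀ : P[D | m] =ᵐ[P] 0)
    (hSp : MemLp S (ENNReal.ofReal p) P) (hDp : MemLp D (ENNReal.ofReal p) P) :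
    ∫ ω, ‖S ω + D ω‖ ^ p ∂P ≤ ∫ ω, ‖S ω‖ ^ p ∂P + 2 * β ^ p * ∫ ω, ‖D ω‖ ^ p ∂P := by
  have integrable_norm_rpow {f : Ω → E} (hf : MemLp f (ENNReal.ofReal p) P) :
      Integrable (fun ω => ‖f ω‖ ^ p) P :=
    (integrable_norm_rpow_iff_memLp_ofReal hf.1 (zero_lt_one.trans_le hp)).2 hf
  have h_add : Integrable (fun ω => ‖S ω + D ω‖ ^ p) P := integrable_norm_rpow (hSp.add hDp)
  have h_sub : Integrable (fun ω => ‖S ω - D ω‖ ^ p) P := integrable_norm_rpow (hSp.sub hDp)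
  have h_left := (integrable_norm_rpow hSp).const_mul 2
  have h_right := (integrable_norm_rpow hDp).const_mul (2 * β ^ p)
  have smooth : ∫ ω, ‖S ω + D ω‖ ^ p ∂P + ∫ ω, ‖S ω - D ω‖ ^ p ∂P ≤
      2 * ∫ ω, ‖S ω‖ ^ p ∂P + 2 * β ^ p * ∫ ω, ‖D ω‖ ^ p ∂P := by
    rw [← integral_add h_add h_sub, ← integral_const_mul, ← integral_const_mul,
      ← integral_add h_left h_right]
    exact integral_mono (h_add.add h_sub) (h_left.add h_right) fun ω => hE (S ω) (D ω)
  have jensen := integral_norm_rpow_le_integral_norm_sub_rpow hp hm hSm hS hD hD₀ h_sub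
  linarith

end

theorem stmt2_general {E : Type*} [NormedAddCommGroup E] [NormedSpace ℝ E] [CompleteSpace E]
    {Ω : Type*} {mΩ : MeasurableSpace Ω} {P : Measure Ω} {p q β : ℝ} (hE : IsSmoothNorm E q β)
    (hβ : 0 ≤ β) (hp : 1 ≤ p) (hpq : p ≤ q) (ℱ : Filtration ℕ mΩ) [SigmaFiniteFiltration P ℱ]
    (D : ℕ → Ω → E) (hadapted : ∀ k, StronglyMeasurable[ℱ (k + 1)] (D k))
    (hint : ∀ k, Integrable (D k) P) (hmom : ∀ k, Integrable (fun ω => ‖D k ω‖ ^ p) P)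
    (hcondmean : ∀ k, P[D k | ℱ k] =ᵐ[P] 0) (n : ℕ) :
    ∫ ω, ‖∑ k ∈ Finset.range n, D k ω‖ ^ p ∂P ≤
      2 * β ^ p * ∑ k ∈ Finset.range n, ∫ ω, ‖D k ω‖ ^ p ∂P := by
  have hp₀ : 0 < p := zero_lt_one.trans_le hp
  have hDp (k : ℕ) : MemLp (D k) (ENNReal.ofReal p) P :=
    (integrable_norm_rpow_iff_memLp_ofReal (hint k).1 hp₀).1 (hmom k)
  induction n with
  | zero => simp [Real.zero_rpow hp₀.ne']
  | succ n ih =>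
    have past_measurable :
        StronglyMeasurable[ℱ n] (fun ω => ∑ k ∈ Finset.range n, D k ω) :=
      Finset.stronglyMeasurable_fun_sum _ fun k hk =>
        (hadapted k).mono (ℱ.mono (Finset.mem_range.1 hk))
    have step := (hE.of_exponent_le hβ hp₀ hpq).integral_norm_add_rpow_le hp (ℱ.le n)
      past_measurable (integrable_finsetSum _ fun k _ => hint k) (hint n) (hcondmean n)
      (memLp_finsetSum _ fun k _ => hDp k) (hDp n)
    simp only [Finset.sum_range_succ, mul_add]
    linarith

/-- **Marcinkiewicz–Zygmund / von Bahr–Esseen inequality in smooth Banach spaces,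
martingale-difference case.** If `(Xₘ)ₘ≥1` are `𝔹`-valued random variables adapted to a
filtration `ℱ` with `E[Xₘ | F_{m-1}] = 0` a.s. and `E‖Xₘ‖^p < ∞` for `p ∈ (1,2]`, in a
separable Banach space whose norm is `(2,β)`-smooth, then for every `n ≥ 1`,
`E‖X₁ + ⋯ + Xₙ‖^p ≤ 2^p β^p ∑_{m=1}^n E‖Xₘ‖^p`. -/
theorem stmt2
    {B : Type*} [NormedAddCommGroup B] [NormedSpace ℝ B] [CompleteSpace B]
    [TopologicalSpace.SeparableSpace B]
    {Ω : Type*} {mΩ : MeasurableSpace Ω} {P : Measure Ω} [IsProbabilityMeasure P]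
    (β : ℝ) (hβ : 1 ≤ β)
    (hsmooth : ∀ x y : B, ‖x + y‖ ^ 2 + ‖x - y‖ ^ 2 ≤ 2 * ‖x‖ ^ 2 + 2 * β ^ 2 * ‖y‖ ^ 2)
    (ℱ : Filtration ℕ mΩ) (X : ℕ → Ω → B) (p : ℝ) (hp1 : 1 < p) (hp2 : p ≤ 2)
    (hadapted : ∀ n : ℕ, 1 ≤ n → StronglyMeasurable[ℱ n] (X n))
    (hint : ∀ n : ℕ, 1 ≤ n → Integrable (X n) P)
    (hmom : ∀ n : ℕ, 1 ≤ n → Integrable (fun ω => ‖X n ω‖ ^ p) P)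
    (hcondmean : ∀ n : ℕ, P[X (n + 1) | ℱ n] =ᵐ[P] fun _ => (0 : B))
    (n : ℕ) (hn : 1 ≤ n) :
    ∫ ω, ‖∑ m ∈ Finset.range n, X (m + 1) ω‖ ^ p ∂P ≤
      2 ^ p * β ^ p * ∑ m ∈ Finset.range n, ∫ ω, ‖X (m + 1) ω‖ ^ p ∂P := by
  refine (stmt2_general (q := 2) (fun x y => by simpa only [Real.rpow_two] using hsmooth x y)
    (zero_le_one.trans hβ) hp1.le hp2 ℱ (fun k => X (k + 1)) (fun k => hadapted _ k.succ_pos)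
    (fun k => hint _ k.succ_pos) (fun k => hmom _ k.succ_pos) hcondmean n).trans ?_
  gcongr
  exact Real.self_le_rpow_of_one_le one_le_two hp1.le
end

section
/- For every n ≥ 1, almost surely ‖S_n − S_{n−1}‖ ≤ 2 and E[‖S_n − S_{n−1}‖² | F_{n−1}] ≤ 2^{p+1}·λ_n^p·(v + ‖μ − Ẑ_n‖^p). -/
open MeasureTheory
open scoped Classical

/-- `truncB x = min(1, ‖x‖)/‖x‖` for `x ≠ 0`, and `truncB 0 = 1`; so `truncB x • x` is the
projection of `x` onto the closed unit ball. -/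
noncomputable def truncB {B : Type*} [NormedAddCommGroup B] (x : B) : ℝ :=
  if x = 0 then 1 else min 1 ‖x‖ / ‖x‖

/-- `K_p = (1/p) ((p-1)/p)^{p-1}`. -/
noncomputable def Kp (p : ℝ) : ℝ := (1 / p) * ((p - 1) / p) ^ (p - 1)

/-- `𝔠_p(ρ) = 2^{p+1} (e^{2ρ} - 2ρ - 1)/(2ρ)²`. -/
noncomputable def frakC (p ρ : ℝ) : ℝ :=
  2 ^ (p + 1) * (Real.exp (2 * ρ) - 2 * ρ - 1) / (2 * ρ) ^ 2

/-!
Put `T = Trunc(λY) Y` and `W = λT`, so that `‖W‖ = min 1 ‖λY‖` and the increment of `S` is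
`W - V` with `V = λ E[T | m]`. Since `‖V‖ ≤ E[‖W‖ | m]`, the increment is bounded by `2`, and
conditional Jensen turns `‖W - V‖² ≤ 2‖W‖² + 2‖V‖²` into `E[‖W - V‖² | m] ≤ 4 E[‖W‖² | m]`.
Finally `(min 1 t)² ≤ t ^ p`, and `‖λY‖ ^ p` with `Y = X - Ẑ` is split at a predictable centre
`c` of `X` by convexity.
-/

section Truncation

variable {E : Type*} [NormedAddCommGroup E]

theorem truncB_eq_inv_max (x : E) : truncB x = (max 1 ‖x‖)⁻¹ := by
  unfold truncB
  split_ifs with hx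
  · simp [hx]
  · have hx0 : ‖x‖ ≠ 0 := norm_ne_zero_iff.2 hx
    rcases le_total 1 ‖x‖ with h | h
    · rw [min_eq_left h, max_eq_right h, one_div]
    · rw [min_eq_right h, max_eq_left h, div_self hx0, inv_one]

theorem continuous_truncB : Continuous (truncB : E → ℝ) := by
  simp only [funext truncB_eq_inv_max]
  exact (continuous_const.max continuous_norm).inv₀ fun x => (by positivity : 0 < max 1 ‖x‖).ne'

theorem norm_truncB_smul_self [NormedSpace ℝ E] (x : E) : ‖truncB x • x‖ = min 1 ‖x‖ := by
  have hmax : 0 < max 1 ‖x‖ := by positivity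
  rw [truncB_eq_inv_max, norm_smul, norm_inv, Real.norm_of_nonneg hmax.le,
    inv_mul_eq_iff_eq_mul₀ hmax.ne', max_mul_min, one_mul]

end Truncation

theorem min_one_sq_le_rpow {t p : ℝ} (ht : 0 ≤ t) (hp0 : 0 ≤ p) (hp2 : p ≤ 2) :
    min 1 t ^ 2 ≤ t ^ p := by
  have hmin : 0 ≤ min 1 t := le_min zero_le_one ht
  calc min 1 t ^ 2 = min 1 t ^ (2 : ℝ) := (Real.rpow_two _).symm
    _ ≤ min 1 t ^ p :=
      Real.rpow_le_rpow_of_exponent_ge_of_imp hmin (min_le_left _ _) hp2 fun _ h => by linarith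
    _ ≤ t ^ p := Real.rpow_le_rpow hmin (min_le_right _ _) hp0

theorem norm_add_rpow_le {E : Type*} [SeminormedAddGroup E] {p : ℝ} (hp : 1 ≤ p) (x y : E) :
    ‖x + y‖ ^ p ≤ 2 ^ (p - 1) * (‖x‖ ^ p + ‖y‖ ^ p) :=
  calc ‖x + y‖ ^ p ≤ (‖x‖ + ‖y‖) ^ p := by gcongr; exact norm_add_le x y
    _ ≤ 2 ^ (p - 1) * (‖x‖ ^ p + ‖y‖ ^ p) := by
      exact_mod_cast NNReal.rpow_add_le_mul_rpow_add_rpow ‖x‖₊ ‖y‖₊ hp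

theorem integrable_norm_sub_rpow {Ω E : Type*} [NormedAddCommGroup E] {mΩ : MeasurableSpace Ω}
    {P : Measure Ω} {f g : Ω → E} {p : ℝ} (hp : 0 < p) (hf : AEStronglyMeasurable f P)
    (hg : AEStronglyMeasurable g P) (hfp : Integrable (fun ω => ‖f ω‖ ^ p) P)
    (hgp : Integrable (fun ω => ‖g ω‖ ^ p) P) :
    Integrable (fun ω => ‖f ω - g ω‖ ^ p) P := by
  lift p to NNReal using hp.le
  have hp0 : (p : ENNReal) ≠ 0 := by exact_mod_cast hp.ne'
  have hfL : MemLp f p P := (integrable_norm_rpow_iff hf hp0 ENNReal.coe_ne_top).1 hfp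
  have hgL : MemLp g p P := (integrable_norm_rpow_iff hg hp0 ENNReal.coe_ne_top).1 hgp
  exact (hfL.sub hgL).integrable_norm_rpow hp0 ENNReal.coe_ne_top

section ConditionalExpectation

variable {Ω E : Type*} [NormedAddCommGroup E] {m mΩ : MeasurableSpace Ω} {P : Measure Ω}

theorem condExp_le_of_le_mul_add_of_integrable (hm : m ≤ mΩ) [SigmaFinite (P.trim hm)]
    {w q a c : Ω → ℝ} (hw : Integrable w P) (hq : Integrable q P) (ha : StronglyMeasurable[m] a)
    (hc : StronglyMeasurable[m] c) (haq : Integrable (a * q) P) (hci : Integrable c P)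
    (hle : w ≤ᵐ[P] a * q + c) :
    P[w | m] ≤ᵐ[P] a * P[q | m] + c := by
  filter_upwards [condExp_mono hw (haq.add hci) hle, condExp_add haq hci m,
    condExp_mul_of_stronglyMeasurable_left ha haq hq] with ω hmono hadd hpull
  rwa [hadd, Pi.add_apply, hpull, condExp_of_stronglyMeasurable hm hc hci] at hmono

theorem condExp_le_of_le_mul_add [IsFiniteMeasure P] (hm : m ≤ mΩ) {w q a c : Ω → ℝ}
    (hw : Integrable w P) (hq : Integrable q P) (ha : StronglyMeasurable[m] a)
    (hc : StronglyMeasurable[m] c) (hle : w ≤ᵐ[P] a * q + c) :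
    P[w | m] ≤ᵐ[P] a * P[q | m] + c := by
  -- `a * q` and `c` need not be integrable, but they become so after multiplication by the weight
  -- `g`, which makes `a` and `c` bounded and can be pulled out and cancelled at the end.
  set g : Ω → ℝ := fun ω => (1 + ‖a ω‖ + ‖c ω‖)⁻¹ with hg_def
  have hden : ∀ ω, 0 < 1 + ‖a ω‖ + ‖c ω‖ := fun ω => by positivity
  have hg_pos : ∀ ω, 0 < g ω := fun ω => inv_pos.2 (hden ω)
  have hg : StronglyMeasurable[m] g :=
    ((measurable_const.add ha.norm.measurable).add hc.norm.measurable).inv.stronglyMeasurable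
  have norm_g_mul_le : ∀ b : Ω → ℝ, (∀ ω, ‖b ω‖ ≤ 1 + ‖a ω‖ + ‖c ω‖) →
      ∀ᵐ ω ∂P, ‖(g * b) ω‖ ≤ 1 := fun b hb => ae_of_all P fun ω => by
    rw [Pi.mul_apply, norm_mul, Real.norm_of_nonneg (hg_pos ω).le, hg_def,
      inv_mul_le_iff₀ (hden ω), mul_one]
    exact hb ω
  have hg_le : ∀ᵐ ω ∂P, ‖g ω‖ ≤ 1 := by
    simpa only [mul_one] using norm_g_mul_le 1 fun ω => by
      rw [Pi.one_apply, norm_one]; linarith [norm_nonneg (a ω), norm_nonneg (c ω)]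
  have hga_le := norm_g_mul_le a fun ω => by linarith [norm_nonneg (c ω)]
  have hgc_le := norm_g_mul_le c fun ω => by linarith [norm_nonneg (a ω)]
  have hgw : Integrable (g * w) P := hw.bdd_mul (hg.mono hm).aestronglyMeasurable hg_le
  have hweighted : P[g * w | m] ≤ᵐ[P] g * a * P[q | m] + g * c := by
    refine condExp_le_of_le_mul_add_of_integrable hm hgw hq (hg.mul ha) (hg.mul hc)
      (hq.bdd_mul ((hg.mul ha).mono hm).aestronglyMeasurable hga_le)
      (.of_bound ((hg.mul hc).mono hm).aestronglyMeasurable 1 hgc_le) ?_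
    filter_upwards [hle] with ω hω
    calc g ω * w ω ≤ g ω * (a ω * q ω + c ω) := mul_le_mul_of_nonneg_left hω (hg_pos ω).le
      _ = g ω * a ω * q ω + g ω * c ω := by ring
  filter_upwards [hweighted, condExp_mul_of_stronglyMeasurable_left hg hgw hw] with ω hω hpull
  rw [hpull] at hω
  refine le_of_mul_le_mul_left (hω.trans_eq ?_) (hg_pos ω)
  simp only [Pi.mul_apply, Pi.add_apply]
  ring

theorem norm_smul_condExp_le [NormedSpace ℝ E] [CompleteSpace E] {l : Ω → ℝ} {T : Ω → E}
    (hl : AEStronglyMeasurable[m] l P) (hlT : Integrable (fun ω => l ω • T ω) P) :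
    ∀ᵐ ω ∂P, ‖l ω • (P[T | m]) ω‖ ≤ (P[fun ω' => ‖l ω' • T ω'‖ | m]) ω := by
  by_cases hT : Integrable T P
  · filter_upwards [condExp_smul_of_aestronglyMeasurable_left hl hlT hT,
      norm_condExp_le (μ := P) (m := m) fun ω => l ω • T ω] with ω hpull hnorm
    exact (congrArg norm hpull).symm.trans_le hnorm
  · -- Here `P[T | m]` is the junk value `0`, and the bound is trivial.
    filter_upwards [condExp_nonneg (μ := P) (m := m)
      (ae_of_all P fun ω => norm_nonneg (l ω • T ω))] with ω hω
    simpa [condExp_of_not_integrable hT] using hω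

variable {W V : Ω → E}

theorem norm_sub_le_two_mul_of_norm_le_condExp {R : ℝ} (hW : ∀ᵐ ω ∂P, ‖W ω‖ ≤ R)
    (hVW : ∀ᵐ ω ∂P, ‖V ω‖ ≤ (P[fun ω' => ‖W ω'‖ | m]) ω) :
    ∀ᵐ ω ∂P, ‖W ω - V ω‖ ≤ 2 * R := by
  have hcond : ∀ᵐ ω ∂P, ‖(P[fun ω' => ‖W ω'‖ | m]) ω‖ ≤ R :=
    ae_bdd_norm_condExp_of_ae_bdd_norm (by simpa using hW)
  filter_upwards [hW, hVW, hcond] with ω hWω hVω hω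
  linarith [norm_sub_le (W ω) (V ω), Real.le_norm_self ((P[fun ω' => ‖W ω'‖ | m]) ω)]

theorem sq_norm_le_condExp_of_norm_le_condExp (hW : MemLp W 2 P)
    (hVW : ∀ᵐ ω ∂P, ‖V ω‖ ≤ (P[fun ω' => ‖W ω'‖ | m]) ω) :
    ∀ᵐ ω ∂P, ‖V ω‖ ^ 2 ≤ (P[fun ω' => ‖W ω'‖ ^ 2 | m]) ω := by
  have hint : Integrable (fun ω => ‖‖W ω‖‖ ^ (2 : ℝ)) P := by
    simpa only [norm_norm, Real.rpow_two] using hW.integrable_norm_pow two_ne_zero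
  have hjensen := Integrable.norm_condExp_rpow_le (m := m) one_le_two hint
  simp only [norm_norm, Real.rpow_two] at hjensen
  filter_upwards [hVW, hjensen] with ω hVω hω
  exact (pow_le_pow_left₀ (norm_nonneg _) (hVω.trans (Real.le_norm_self _)) 2).trans hω

theorem condExp_sq_norm_sub_le [IsFiniteMeasure P] (hm : m ≤ mΩ) (hW : MemLp W 2 P)
    (hV : StronglyMeasurable[m] V)
    (hVW : ∀ᵐ ω ∂P, ‖V ω‖ ≤ (P[fun ω' => ‖W ω'‖ | m]) ω) :
    ∀ᵐ ω ∂P, (P[fun ω' => ‖W ω' - V ω'‖ ^ 2 | m]) ω ≤ 4 * (P[fun ω' => ‖W ω'‖ ^ 2 | m]) ω := by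
  have hW2 : Integrable (fun ω => ‖W ω‖ ^ 2) P := hW.integrable_norm_pow two_ne_zero
  have hV2 := sq_norm_le_condExp_of_norm_le_condExp hW hVW
  have hVL : MemLp V 2 P :=
    (memLp_two_iff_integrable_sq_norm (hV.mono hm).aestronglyMeasurable).2 <|
      integrable_condExp.mono' ((hV.mono hm).norm.pow 2).aestronglyMeasurable <| by
        simpa using hV2
  have hWV2 : Integrable (fun ω => ‖W ω - V ω‖ ^ 2) P :=
    (hW.sub hVL).integrable_norm_pow two_ne_zero
  have hparallelogram : ∀ ω, ‖W ω - V ω‖ ^ 2 ≤ 2 * ‖W ω‖ ^ 2 + 2 * ‖V ω‖ ^ 2 := fun ω =>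
    calc ‖W ω - V ω‖ ^ 2 ≤ (‖W ω‖ + ‖V ω‖) ^ 2 := by gcongr; exact norm_sub_le _ _
      _ ≤ 2 * (‖W ω‖ ^ 2 + ‖V ω‖ ^ 2) := add_sq_le
      _ = 2 * ‖W ω‖ ^ 2 + 2 * ‖V ω‖ ^ 2 := mul_add _ _ _
  filter_upwards [hV2, condExp_le_of_le_mul_add hm hWV2 hW2 stronglyMeasurable_const
    ((hV.norm.pow 2).const_mul 2) (ae_of_all P hparallelogram)] with ω hVω hω
  simp only [Pi.add_apply, Pi.mul_apply, Pi.pow_apply] at hω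
  linarith

end ConditionalExpectation

section TruncatedIncrement

variable {Ω E : Type*} [NormedAddCommGroup E] [NormedSpace ℝ E] {m mΩ : MeasurableSpace Ω}
  {P : Measure Ω} {l : Ω → ℝ} {Y : Ω → E}

/-- The truncated variable `Trunc(λY) Y`, i.e. `Y` projected onto the ball of radius `1 / |λ|`
(and `Y` itself where `λ = 0`). -/
noncomputable def truncScaled (l : Ω → ℝ) (Y : Ω → E) (ω : Ω) : E :=
  truncB (l ω • Y ω) • Y ω

/-- The increment `λ (T - E[T | m])` of the martingale `S`, where `T = Trunc(λY) Y`; the two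
occurrences of `Ẑ` in the increment of the paper cancel. As in `stmt5`, the conditional expectation
is the one of Mathlib, which is `0` if `T` is not integrable. -/
noncomputable def truncIncrement (P : Measure[mΩ] Ω) (m : MeasurableSpace Ω) (l : Ω → ℝ)
    (Y : Ω → E) (ω : Ω) : E :=
  l ω • (truncScaled l Y ω - (P[truncScaled l Y | m]) ω)

theorem norm_smul_truncScaled (ω : Ω) : ‖l ω • truncScaled l Y ω‖ = min 1 ‖l ω • Y ω‖ := by
  rw [truncScaled, smul_comm, norm_truncB_smul_self]

theorem aestronglyMeasurable_smul_truncScaled (hl : AEStronglyMeasurable l P)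
    (hY : AEStronglyMeasurable Y P) :
    AEStronglyMeasurable (fun ω => l ω • truncScaled l Y ω) P :=
  hl.smul ((continuous_truncB.comp_aestronglyMeasurable (hl.smul hY)).smul hY)

theorem memLp_smul_truncScaled [IsFiniteMeasure P] (hl : AEStronglyMeasurable l P)
    (hY : AEStronglyMeasurable Y P) (r : ENNReal) :
    MemLp (fun ω => l ω • truncScaled l Y ω) r P :=
  .of_bound (aestronglyMeasurable_smul_truncScaled hl hY) 1 <| ae_of_all P fun ω =>
    (norm_smul_truncScaled ω).trans_le (min_le_left _ _)

theorem norm_smul_condExp_truncScaled_le [CompleteSpace E] [IsFiniteMeasure P] (hm : m ≤ mΩ)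
    (hl : StronglyMeasurable[m] l) (hY : AEStronglyMeasurable Y P) :
    ∀ᵐ ω ∂P, ‖l ω • (P[truncScaled l Y | m]) ω‖ ≤
      (P[fun ω' => ‖l ω' • truncScaled l Y ω'‖ | m]) ω :=
  norm_smul_condExp_le hl.aestronglyMeasurable <| memLp_one_iff_integrable.1 <|
    memLp_smul_truncScaled (hl.mono hm).aestronglyMeasurable hY 1

theorem norm_truncIncrement_le_two [CompleteSpace E] [IsFiniteMeasure P] (hm : m ≤ mΩ)
    (hl : StronglyMeasurable[m] l) (hY : AEStronglyMeasurable Y P) :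
    ∀ᵐ ω ∂P, ‖truncIncrement P m l Y ω‖ ≤ 2 := by
  simp only [truncIncrement, smul_sub]
  simpa only [mul_one] using norm_sub_le_two_mul_of_norm_le_condExp
    (ae_of_all P fun ω => (norm_smul_truncScaled ω).trans_le (min_le_left _ _))
    (norm_smul_condExp_truncScaled_le hm hl hY)

theorem condExp_sq_norm_truncIncrement_le [CompleteSpace E] [IsFiniteMeasure P] (hm : m ≤ mΩ)
    (hl : StronglyMeasurable[m] l) (hY : AEStronglyMeasurable Y P) :
    ∀ᵐ ω ∂P, (P[fun ω' => ‖truncIncrement P m l Y ω'‖ ^ 2 | m]) ω ≤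
      4 * (P[fun ω' => ‖l ω' • truncScaled l Y ω'‖ ^ 2 | m]) ω := by
  simp only [truncIncrement, smul_sub]
  exact condExp_sq_norm_sub_le hm (memLp_smul_truncScaled (hl.mono hm).aestronglyMeasurable hY 2)
    (hl.smul stronglyMeasurable_condExp) (norm_smul_condExp_truncScaled_le hm hl hY)

variable {X Z c : Ω → E} {p : ℝ}

theorem sq_norm_smul_truncScaled_sub_le (hp1 : 1 ≤ p) (hp2 : p ≤ 2) (ω : Ω) :
    ‖l ω • truncScaled l (X - Z) ω‖ ^ 2 ≤
      2 ^ (p - 1) * |l ω| ^ p * (‖X ω - c ω‖ ^ p + ‖c ω - Z ω‖ ^ p) :=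
  calc ‖l ω • truncScaled l (X - Z) ω‖ ^ 2 = min 1 ‖l ω • (X ω - Z ω)‖ ^ 2 := by
        rw [norm_smul_truncScaled, Pi.sub_apply]
    _ ≤ ‖l ω • (X ω - Z ω)‖ ^ p := min_one_sq_le_rpow (norm_nonneg _) (by linarith) hp2
    _ = |l ω| ^ p * ‖(X ω - c ω) + (c ω - Z ω)‖ ^ p := by
        rw [norm_smul, Real.norm_eq_abs, Real.mul_rpow (abs_nonneg _) (norm_nonneg _),
          sub_add_sub_cancel]
    _ ≤ |l ω| ^ p * (2 ^ (p - 1) * (‖X ω - c ω‖ ^ p + ‖c ω - Z ω‖ ^ p)) := by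
        gcongr
        exact norm_add_rpow_le hp1 _ _
    _ = 2 ^ (p - 1) * |l ω| ^ p * (‖X ω - c ω‖ ^ p + ‖c ω - Z ω‖ ^ p) := by ring

theorem condExp_sq_norm_smul_truncScaled_sub_le [IsFiniteMeasure P] (hm : m ≤ mΩ) (hp1 : 1 ≤ p)
    (hp2 : p ≤ 2) (hl : StronglyMeasurable[m] l) (hX : AEStronglyMeasurable X P)
    (hZ : StronglyMeasurable[m] Z) (hc : StronglyMeasurable[m] c)
    (hXc : Integrable (fun ω => ‖X ω - c ω‖ ^ p) P) :
    ∀ᵐ ω ∂P, (P[fun ω' => ‖l ω' • truncScaled l (X - Z) ω'‖ ^ 2 | m]) ω ≤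
      2 ^ (p - 1) * |l ω| ^ p *
        ((P[fun ω' => ‖X ω' - c ω'‖ ^ p | m]) ω + ‖c ω - Z ω‖ ^ p) := by
  have hcoef : StronglyMeasurable[m] fun ω => 2 ^ (p - 1) * |l ω| ^ p :=
    ((hl.norm.measurable.pow_const p).const_mul _).stronglyMeasurable
  have hbias : StronglyMeasurable[m] fun ω => ‖c ω - Z ω‖ ^ p :=
    ((hc.sub hZ).norm.measurable.pow_const p).stronglyMeasurable
  have hW : MemLp (fun ω => l ω • truncScaled l (X - Z) ω) 2 P :=
    memLp_smul_truncScaled (hl.mono hm).aestronglyMeasurable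
      (hX.sub (hZ.mono hm).aestronglyMeasurable) 2
  have hcond := condExp_le_of_le_mul_add hm (hW.integrable_norm_pow two_ne_zero) hXc hcoef
    (hcoef.mul hbias) <| ae_of_all P fun ω =>
      (sq_norm_smul_truncScaled_sub_le (c := c) hp1 hp2 ω).trans_eq (mul_add _ _ _)
  filter_upwards [hcond] with ω hω
  exact hω.trans_eq (mul_add _ _ _).symm

theorem condExp_sq_norm_truncIncrement_sub_le [CompleteSpace E] [IsFiniteMeasure P] (hm : m ≤ mΩ)
    (hp1 : 1 ≤ p) (hp2 : p ≤ 2) (hl : StronglyMeasurable[m] l) (hX : AEStronglyMeasurable X P)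
    (hZ : StronglyMeasurable[m] Z) (hc : StronglyMeasurable[m] c)
    (hXc : Integrable (fun ω => ‖X ω - c ω‖ ^ p) P) :
    ∀ᵐ ω ∂P, (P[fun ω' => ‖truncIncrement P m l (X - Z) ω'‖ ^ 2 | m]) ω ≤
      2 ^ (p + 1) * |l ω| ^ p *
        ((P[fun ω' => ‖X ω' - c ω'‖ ^ p | m]) ω + ‖c ω - Z ω‖ ^ p) := by
  have hpow : (2 : ℝ) ^ (p + 1) = 4 * 2 ^ (p - 1) := by
    rw [show p + 1 = 2 + (p - 1) by ring, Real.rpow_add two_pos, Real.rpow_two]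
    norm_num
  filter_upwards [condExp_sq_norm_truncIncrement_le hm hl
      (hX.sub (hZ.mono hm).aestronglyMeasurable),
    condExp_sq_norm_smul_truncScaled_sub_le hm hp1 hp2 hl hX hZ hc hXc] with ω hincr htrunc
  rw [hpow]
  linarith

end TruncatedIncrement

theorem stmt5_general
    {B : Type*} [NormedAddCommGroup B] [NormedSpace ℝ B] [CompleteSpace B]
    {Ω : Type*} {mΩ : MeasurableSpace Ω} {P : Measure Ω} [IsFiniteMeasure P]
    (ℱ : Filtration ℕ mΩ) (X c : ℕ → Ω → B) (v : ℕ → Ω → ℝ) (p : ℝ) (hp1 : 1 ≤ p) (hp2 : p ≤ 2)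
    (hX : ∀ n, AEStronglyMeasurable (X (n + 1)) P)
    (hc : ∀ n, StronglyMeasurable[ℱ n] (c (n + 1)))
    (hmom : ∀ n, Integrable (fun ω => ‖X (n + 1) ω - c (n + 1) ω‖ ^ p) P)
    (hcondmom : ∀ n, ∀ᵐ ω ∂P,
      (P[fun ω' => ‖X (n + 1) ω' - c (n + 1) ω'‖ ^ p | ℱ n]) ω ≤ v (n + 1) ω)
    (Z : ℕ → Ω → B) (hZ : ∀ n, StronglyMeasurable[ℱ n] (Z (n + 1)))
    (lam : ℕ → Ω → ℝ) (hlam : ∀ n, StronglyMeasurable[ℱ n] (lam (n + 1)))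
    (S : ℕ → Ω → B)
    (hS : ∀ n ω, S n ω = ∑ m ∈ Finset.range n,
      lam (m + 1) ω •
        (truncB (lam (m + 1) ω • (X (m + 1) ω - Z (m + 1) ω)) • (X (m + 1) ω - Z (m + 1) ω)
          + Z (m + 1) ω
          - ((P[fun ω' => truncB (lam (m + 1) ω' • (X (m + 1) ω' - Z (m + 1) ω')) •
                (X (m + 1) ω' - Z (m + 1) ω') | ℱ m]) ω + Z (m + 1) ω)))
    (n : ℕ) :
    (∀ᵐ ω ∂P, ‖S (n + 1) ω - S n ω‖ ≤ 2) ∧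
      (∀ᵐ ω ∂P, (P[fun ω' => ‖S (n + 1) ω' - S n ω'‖ ^ 2 | ℱ n]) ω ≤
        2 ^ (p + 1) * |lam (n + 1) ω| ^ p *
          (v (n + 1) ω + ‖c (n + 1) ω - Z (n + 1) ω‖ ^ p)) := by
  have hincr : ∀ ω, S (n + 1) ω - S n ω =
      truncIncrement P (ℱ n) (lam (n + 1)) (X (n + 1) - Z (n + 1)) ω := fun ω => by
    rw [hS (n + 1), hS n, Finset.sum_range_succ, add_sub_cancel_left, add_sub_add_right_eq_sub]
    rfl
  simp only [hincr]
  have hY := (hX n).sub ((hZ n).mono (ℱ.le n)).aestronglyMeasurable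
  refine ⟨norm_truncIncrement_le_two (ℱ.le n) (hlam n) hY, ?_⟩
  filter_upwards [hcondmom n, condExp_sq_norm_truncIncrement_sub_le (ℱ.le n) hp1 hp2 (hlam n)
    (hX n) (hZ n) (hc n) (hmom n)] with ω hv hω
  exact hω.trans (by gcongr)

/-- **Increment bounds for the truncated martingale `S`.** For every `n ≥ 1`, almost surely
`‖Sₙ - S_{n-1}‖ ≤ 2` and `E[‖Sₙ - S_{n-1}‖² | F_{n-1}] ≤ 2^{p+1} λₙ^p (v + ‖μ - Ẑₙ‖^p)`. -/
theorem stmt5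
    {B : Type*} [NormedAddCommGroup B] [NormedSpace ℝ B] [CompleteSpace B]
    [TopologicalSpace.SeparableSpace B]
    {Ω : Type*} {mΩ : MeasurableSpace Ω} {P : Measure Ω} [IsProbabilityMeasure P]
    (ℱ : Filtration ℕ mΩ) (X : ℕ → Ω → B) (μ : B) (p v : ℝ)
    (hp1 : 1 < p) (hp2 : p ≤ 2) (hv : 0 < v)
    (hadapted : ∀ n : ℕ, 1 ≤ n → StronglyMeasurable[ℱ n] (X n))
    (hint : ∀ n : ℕ, 1 ≤ n → Integrable (X n) P)
    (hmom : ∀ n : ℕ, 1 ≤ n → Integrable (fun ω => ‖X n ω‖ ^ p) P)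
    (hcondmean : ∀ n : ℕ, P[X (n + 1) | ℱ n] =ᵐ[P] fun _ => μ)
    (hcondmom : ∀ n : ℕ, ∀ᵐ ω ∂P, (P[fun ω' => ‖X (n + 1) ω' - μ‖ ^ p | ℱ n]) ω ≤ v)
    (Z : ℕ → Ω → B) (hZpred : ∀ n : ℕ, StronglyMeasurable[ℱ n] (Z (n + 1)))
    (lam : ℕ → Ω → ℝ) (hlampred : ∀ n : ℕ, StronglyMeasurable[ℱ n] (lam (n + 1)))
    (hlampos : ∀ n ω, 0 < lam n ω)
    (S : ℕ → Ω → B)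
    (hS : ∀ n ω, S n ω = ∑ m ∈ Finset.range n,
      lam (m + 1) ω •
        (truncB (lam (m + 1) ω • (X (m + 1) ω - Z (m + 1) ω)) • (X (m + 1) ω - Z (m + 1) ω)
          + Z (m + 1) ω
          - ((P[fun ω' => truncB (lam (m + 1) ω' • (X (m + 1) ω' - Z (m + 1) ω')) •
                (X (m + 1) ω' - Z (m + 1) ω') | ℱ m]) ω + Z (m + 1) ω)))
    (n : ℕ) :
    (∀ᵐ ω ∂P, ‖S (n + 1) ω - S n ω‖ ≤ 2) ∧
      (∀ᵐ ω ∂P, (P[fun ω' => ‖S (n + 1) ω' - S n ω'‖ ^ 2 | ℱ n]) ω ≤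
        2 ^ (p + 1) * lam (n + 1) ω ^ p * (v + ‖μ - Z (n + 1) ω‖ ^ p)) := by
  have hX := fun n => ((hadapted (n + 1) n.succ_pos).mono (ℱ.le _)).aestronglyMeasurable (μ := P)
  simpa only [abs_of_pos (hlampos _ _)] using
    stmt5_general ℱ X (fun _ _ => μ) (fun _ _ => v) p hp1.le hp2 hX
      (fun _ => stronglyMeasurable_const)
      (fun n => integrable_norm_sub_rpow (zero_lt_one.trans hp1) (hX n) aestronglyMeasurable_const
        (hmom (n + 1) n.succ_pos) (integrable_const _))
      hcondmom Z hZpred lam hlampred S hS n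
end
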